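/- Weighted Poincaré inequality with axial weights for matrix fields (Lemma 2(b)): For every real δ ≠ 0, every ρ₀ > 0, and every continuously differentiable symmetric 2×2 matrix-valued function λ̄' on ℝ³ with compact support and vanishing on K_{ρ₀}, δ⁻² ∫_{Ω_{ρ₀}} |∇λ̄'|² ρ^{−2δ} dΣ ≥ ∫_{Ω_{ρ₀}} |λ̄'|² ρ^{−2δ−2} dΣ, where |λ̄'|² = λ̄'₁₁² + λ̄'₂₂² + 2λ̄'₁₂² = Tr(λ̄'ᵗλ̄') and |∇λ̄'|² is the corresponding sum over entries of |∇λ̄'_{ij}|². -/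

import Mathlib

/- Formalization preamble for:
   "Small deformations of extreme five-dimensional vacuum black hole initial data"
   Work on ℝ³ (Euclidean); cylindrical radius ρ(x)=√(x₀²+x₁²), axis coordinate z = x₂.
   The measure dΣ = ρ dρ dz dφ is Lebesgue measure on ℝ³. -/

open MeasureTheory Real
open scoped RealInnerProductSpace BigOperators

noncomputable section

namespace BHMass

/-- ℝ³ as a Euclidean space. -/
abbrev E3 : Type := EuclideanSpace ℝ (Fin 3)

/-- Cylindrical radius ρ. -/
def cylRho (x : E3) : ℝ := Real.sqrt ((x 0) ^ 2 + (x 1) ^ 2)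

/-- The solid cylinder K_{ρ₀} = {ρ ≤ ρ₀}. -/
def Kcyl (ρ₀ : ℝ) : Set E3 := {x | cylRho x ≤ ρ₀}

/-- Ω_{ρ₀} = ℝ³ ∖ K_{ρ₀}. -/
def Omg (ρ₀ : ℝ) : Set E3 := {x | ρ₀ < cylRho x}

/-- σ = √(r² + 1). -/
def sigmaW (x : E3) : ℝ := Real.sqrt (‖x‖ ^ 2 + 1)

/-- Flat gradient on ℝ³. -/
def grad (f : E3 → ℝ) : E3 → E3 := gradient f

/-- Flat Laplacian Δ₃. -/
def lap (f : E3 → ℝ) (x : E3) : ℝ :=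
  ∑ i : Fin 3, iteratedFDeriv ℝ 2 f x ![EuclideanSpace.single i 1, EuclideanSpace.single i 1]

/-- Flat divergence ∇· of a vector field. -/
def divg (V : E3 → E3) (x : E3) : ℝ :=
  ∑ i : Fin 3, fderiv ℝ (fun y => V y i) x (EuclideanSpace.single i 1)

/-- A scalar field is axisymmetric if it depends only on (ρ, z). -/
def Axisym (f : E3 → ℝ) : Prop :=
  ∀ x y : E3, cylRho x = cylRho y → x 2 = y 2 → f x = f y

abbrev Mat2 : Type := Matrix (Fin 2) (Fin 2) ℝ

/-- ∇Yᵗ A ∇Z = Σᵢⱼ Aᵢⱼ ⟪∇Yᵢ, ∇Zⱼ⟫ (gradients contracted with the flat metric). -/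
def quadG (A : Mat2) (Y Z : E3 → Fin 2 → ℝ) (x : E3) : ℝ :=
  ∑ i, ∑ j, A i j * ⟪grad (fun y => Y y i) x, grad (fun y => Z y j) x⟫

/-- aᵗ A b for 2-vectors. -/
def vecQuad (A : Mat2) (a b : Fin 2 → ℝ) : ℝ := ∑ i, ∑ j, a i * A i j * b j

/-- det(∇L) = ∇L₁₁·∇L₂₂ − ∇L₁₂·∇L₁₂. -/
def gradDet (L : E3 → Mat2) (x : E3) : ℝ :=
  ⟪grad (fun y => L y 0 0) x, grad (fun y => L y 1 1) x⟫ -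
    ⟪grad (fun y => L y 0 1) x, grad (fun y => L y 0 1) x⟫

/-- A data (or perturbation) triple u = (v, λ', Y). -/
structure Data where
  v : E3 → ℝ
  L : E3 → Mat2
  Y : E3 → Fin 2 → ℝ

/-- The zero triple. -/
def zeroData : Data := ⟨fun _ => 0, fun _ => 0, fun _ => 0⟩

/-- All components smooth. -/
def SmoothData (u : Data) : Prop :=
  ContDiff ℝ (⊤ : ℕ∞) u.v ∧ (∀ i j, ContDiff ℝ (⊤ : ℕ∞) fun x => u.L x i j) ∧
    ∀ i, ContDiff ℝ (⊤ : ℕ∞) fun x => u.Y x i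

/-- All components axisymmetric. -/
def AxisymData (u : Data) : Prop :=
  Axisym u.v ∧ (∀ i j, Axisym fun x => u.L x i j) ∧ ∀ i, Axisym fun x => u.Y x i

/-- λ = e^{2v} λ'. -/
def lamD (u : Data) (x : E3) : Mat2 := Real.exp (2 * u.v x) • u.L x

/-- X = det λ = e^{4v} ρ². -/
def XD (u : Data) (x : E3) : ℝ := Real.exp (4 * u.v x) * cylRho x ^ 2

/-- u + t·φ. -/
def addS (u φ : Data) (t : ℝ) : Data :=
  ⟨fun x => u.v x + t * φ.v x, fun x => u.L x + t • φ.L x, fun x => u.Y x + t • φ.Y x⟩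

/-- The expression σ^{-β} |f| + σ^{-β+1} |∇f| appearing in the C¹_β norm,
    for given pointwise magnitudes m = |f| and dm = |∇f|. -/
def c1Expr (β : ℝ) (m dm : E3 → ℝ) (x : E3) : ℝ :=
  sigmaW x ^ (-β) * m x + sigmaW x ^ (-β + 1) * dm x

/-- The weighted C¹_β norm over Ω. -/
def c1Norm (β : ℝ) (Ω : Set E3) (m dm : E3 → ℝ) : ℝ := ⨆ x ∈ Ω, c1Expr β m dm x

/-- Finiteness of the C¹_β norm over Ω. -/
def c1Fin (β : ℝ) (Ω : Set E3) (m dm : E3 → ℝ) : Prop := BddAbove (c1Expr β m dm '' Ω)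

/-- |M|² = Tr(MᵗM). -/
def matAbsSq (M : Mat2) : ℝ := ∑ i, ∑ j, (M i j) ^ 2

/-- |∇L|² (sum over entries of |∇L_{ij}|²). -/
def gradMatAbsSq (L : E3 → Mat2) (x : E3) : ℝ := ∑ i, ∑ j, ‖grad (fun y => L y i j) x‖ ^ 2

/-- The Banach norm ‖φ‖_B = ‖v̄‖_{C¹_β(ℝ³)} + ‖λ̄'‖_{C¹_β(Ω_{ρ₀})} + ‖Ȳ‖_{C¹_β(Ω_{ρ₀})},
    where |Ȳ| = (Ȳᵗ λ'₀⁻¹ Ȳ)^{1/2}, |∇Ȳ| = (∇Ȳᵗ λ'₀⁻¹ ∇Ȳ)^{1/2}. -/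
def BNorm (β ρ₀ : ℝ) (L0 : E3 → Mat2) (φ : Data) : ℝ :=
  c1Norm β Set.univ (fun x => |φ.v x|) (fun x => ‖grad φ.v x‖)
  + c1Norm β (Omg ρ₀) (fun x => Real.sqrt (matAbsSq (φ.L x)))
      (fun x => Real.sqrt (gradMatAbsSq φ.L x))
  + c1Norm β (Omg ρ₀) (fun x => Real.sqrt (vecQuad (L0 x)⁻¹ (φ.Y x) (φ.Y x)))
      (fun x => Real.sqrt (quadG (L0 x)⁻¹ φ.Y φ.Y x))

/-- Finiteness of ‖φ‖_B. -/
def FiniteB (β ρ₀ : ℝ) (L0 : E3 → Mat2) (φ : Data) : Prop :=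
  c1Fin β Set.univ (fun x => |φ.v x|) (fun x => ‖grad φ.v x‖) ∧
  c1Fin β (Omg ρ₀) (fun x => Real.sqrt (matAbsSq (φ.L x)))
      (fun x => Real.sqrt (gradMatAbsSq φ.L x)) ∧
  c1Fin β (Omg ρ₀) (fun x => Real.sqrt (vecQuad (L0 x)⁻¹ (φ.Y x) (φ.Y x)))
      (fun x => Real.sqrt (quadG (L0 x)⁻¹ φ.Y φ.Y x))

/-- Perturbation triple: smooth, axisymmetric, λ̄' and Ȳ vanishing on K_{ρ₀},
    λ̄' symmetric with det λ̄' = 0 and Tr(adj(λ'₀) λ̄') = 0. -/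
def IsPert (ρ₀ : ℝ) (L0 : E3 → Mat2) (φ : Data) : Prop :=
  SmoothData φ ∧ AxisymData φ ∧
  (∀ x, cylRho x ≤ ρ₀ → φ.L x = 0 ∧ φ.Y x = 0) ∧
  (∀ x, (φ.L x).IsSymm) ∧
  (∀ x, (φ.L x).det = 0) ∧
  (∀ x, ((L0 x).adjugate * φ.L x).trace = 0)

/-- Membership in the Banach space B. -/
def InB (β ρ₀ : ℝ) (L0 : E3 → Mat2) (φ : Data) : Prop :=
  IsPert ρ₀ L0 φ ∧ FiniteB β ρ₀ L0 φ

/-- The Hilbert norm squared ‖φ‖²_H = ‖v̄‖²_{H₁} + ‖λ̄'‖²_{H₂} + ‖Ȳ‖²_{H₃}. -/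
def HNormSq (ρ₀ : ℝ) (L0 : E3 → Mat2) (φ : Data) : ℝ :=
  (∫ x : E3, (‖grad φ.v x‖ ^ 2 / ‖x‖ ^ 2 + (φ.v x) ^ 2 / ‖x‖ ^ 4)) +
  (∫ x in Omg ρ₀, (gradMatAbsSq φ.L x / cylRho x ^ 2 + matAbsSq (φ.L x) / cylRho x ^ 4)) +
  (∫ x in Omg ρ₀, (quadG (L0 x)⁻¹ φ.Y φ.Y x / cylRho x ^ 2
      + vecQuad (L0 x)⁻¹ (φ.Y x) (φ.Y x) / cylRho x ^ 4))

/-- Bulk integrand of the mass functional. -/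
def massIntegrand (u : Data) (x : E3) : ℝ :=
  -gradDet u.L x / (2 * cylRho x ^ 2)
  + Real.exp (-(6 : ℝ) * u.v x) * quadG (u.L x)⁻¹ u.Y u.Y x / (2 * cylRho x ^ 2)
  + 6 * ‖grad u.v x‖ ^ 2

/-- The mass functional 𝓜, with rod boundary term R. -/
def massFun (R : (E3 → Mat2) → ℝ) (u : Data) : ℝ :=
  (1 / 8) * (∫ x : E3, massIntegrand u x) + R u.L

/-- The rod term depends only on λ' on the cylinder K_{ρ₀} (a neighbourhood of the
    axis), hence is unchanged by perturbations vanishing on K_{ρ₀}. -/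
def RodLocal (ρ₀ : ℝ) (R : (E3 → Mat2) → ℝ) : Prop :=
  ∀ L L' : E3 → Mat2, (∀ x, cylRho x ≤ ρ₀ → L x = L' x) → R L = R L'

/-- First stationary (Euler–Lagrange) equation: 4Δ₃v + X⁻¹ ∇Yᵗ λ⁻¹ ∇Y = 0. -/
def EL1 (u : Data) (x : E3) : Prop :=
  4 * lap u.v x + quadG (lamD u x)⁻¹ u.Y u.Y x / XD u x = 0

/-- Second stationary equation: ∇·(ρ⁻² ∇λ') + X⁻² e^{2v} ∇Y ∇Yᵗ = 0. -/
def EL2 (u : Data) (x : E3) : Prop :=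
  ∀ i j, divg (fun y => (cylRho y ^ 2)⁻¹ • grad (fun z => u.L z i j) y) x
    + Real.exp (2 * u.v x) / XD u x ^ 2 *
        ⟪grad (fun y => u.Y y i) x, grad (fun y => u.Y y j) x⟫ = 0

/-- Third stationary equation: ∇·(X⁻¹ λ⁻¹ ∇Y) = 0. -/
def EL3 (u : Data) (x : E3) : Prop :=
  ∀ i, divg (fun y => (XD u y)⁻¹ • ∑ j, ((lamD u y)⁻¹ i j) • grad (fun z => u.Y z j) y) x = 0

/-- |∇λ λ⁻¹|² (entrywise, gradients contracted with the flat metric). -/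
def gradLamLamInvSq (u : Data) (x : E3) : ℝ :=
  ∑ i, ∑ j, ‖∑ k, ((lamD u x)⁻¹ k j) • grad (fun y => lamD u y i k) x‖ ^ 2

/-- The bounds defining the extreme class (Definition 1, items 1–4); all pointwise
    bounds are imposed on the region ρ ≤ r². -/
def ExtremeBounds (ρ₀ : ℝ) (u : Data) : Prop :=
  ∃ C C₁ C₂ C₃ C₄ C' : ℝ, 0 < C ∧ 0 < C₁ ∧ 0 < C₂ ∧ 0 < C₃ ∧ 0 < C₄ ∧ 0 < C' ∧
    (∀ x : E3, 0 < cylRho x → cylRho x ≤ ‖x‖ ^ 2 →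
      quadG (lamD u x)⁻¹ u.Y u.Y x / XD u x ≤ C / ‖x‖ ^ 4 ∧
      Real.exp (-(2 : ℝ) * u.v x) * quadG (lamD u x)⁻¹ u.Y u.Y x / XD u x ≤ C / ‖x‖ ^ 2 ∧
      cylRho x ^ 2 ≤ XD u x ∧
      ‖grad u.v x‖ ^ 2 ≤ C / ‖x‖ ^ 4 ∧
      ‖grad (fun y => Real.log (XD u y)) x‖ ^ 2 ≤ C / cylRho x ^ 2) ∧
    (∀ x ∈ Omg ρ₀, cylRho x ≤ ‖x‖ ^ 2 →
      (lamD u x - (C₁ * cylRho x) • (1 : Mat2)).PosSemidef ∧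
      ((C₂ * cylRho x) • (1 : Mat2) - lamD u x).PosSemidef ∧
      ((lamD u x)⁻¹ - (C₃ / cylRho x) • (1 : Mat2)).PosSemidef ∧
      ((C₄ / cylRho x) • (1 : Mat2) - (lamD u x)⁻¹).PosSemidef ∧
      XD u x ^ 2 ≤ C' * cylRho x ^ 4 ∧
      gradLamLamInvSq u x ≤ C / cylRho x ^ 2)

/-- The potential X_t⁻¹ Ȳᵗ λ_t⁻¹ Ȳ + 16 v̄² whose Laplacian carries the boundary
    term in the integrated Carter identity. -/
def carterPot (u φ : Data) (t : ℝ) (y : E3) : ℝ :=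
  vecQuad (lamD (addS u φ t) y)⁻¹ (φ.Y y) (φ.Y y) / XD (addS u φ t) y + 16 * (φ.v y) ^ 2

/-- Rendering of condition (ii) of the extreme class: the decay and boundary
    conditions make all boundary terms arising in integration by parts against
    perturbations in B vanish (the total divergences integrate to zero). -/
def NoBoundaryTerms (β ρ₀ : ℝ) (u : Data) : Prop :=
  ∀ φ : Data, InB β ρ₀ u.L φ → ∀ t ∈ Set.Ico (0 : ℝ) 1,
    (∫ x : E3, lap (carterPot u φ t) x) = 0

/-- The extreme class E (Definition 1): smooth axisymmetric data with symmetric,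
    positive-definite λ'₀, det λ'₀ = ρ², satisfying the stationary field
    equations, the boundary conditions, and the extreme bounds. -/
def IsExtremeData (β ρ₀ : ℝ) (u : Data) : Prop :=
  SmoothData u ∧ AxisymData u ∧
  (∀ x, (u.L x).IsSymm) ∧
  (∀ x, (u.L x).det = cylRho x ^ 2) ∧
  (∀ x, 0 < cylRho x → (u.L x).PosDef) ∧
  (∀ x, 0 < cylRho x → EL1 u x ∧ EL2 u x ∧ EL3 u x) ∧
  NoBoundaryTerms β ρ₀ u ∧
  ExtremeBounds ρ₀ u

/-- Integrand of the second variation E''_φ(t). -/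
def svIntegrand (u φ : Data) (t : ℝ) (x : E3) : ℝ :=
  let w := addS u φ t
  12 * ‖grad φ.v x‖ ^ 2 - gradDet φ.L x / cylRho x ^ 2
  + Real.exp (-(6 : ℝ) * w.v x) / cylRho x ^ 4 *
      (2 * quadG (φ.L x).adjugate w.Y φ.Y x
        + quadG (w.L x).adjugate φ.Y φ.Y x
        - 6 * φ.v x * quadG (φ.L x).adjugate w.Y w.Y x
        - 12 * φ.v x * quadG (w.L x).adjugate w.Y φ.Y x
        + 18 * (φ.v x) ^ 2 * quadG (w.L x).adjugate w.Y w.Y x)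

/-- The second variation E''_φ(t). -/
def secondVar (u φ : Data) (t : ℝ) : ℝ := (1 / 8) * ∫ x : E3, svIntegrand u φ t x

/-- λ̄ = 2 v̄ λ + λ λ'⁻¹ λ̄'. -/
def lamBar (w φ : Data) (x : E3) : Mat2 :=
  (2 * φ.v x) • lamD w x + lamD w x * (w.L x)⁻¹ * φ.L x

/-- U₁ = X⁻¹ λ⁻¹ Ȳ. -/
def U1f (w φ : Data) (y : E3) : Fin 2 → ℝ := fun i =>
  (XD w y)⁻¹ * ∑ j, (lamD w y)⁻¹ i j * φ.Y y j

/-- U₂ = X⁻¹ λ⁻¹ ∇Y. -/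
def U2f (w : Data) (x : E3) (i : Fin 2) : E3 :=
  (XD w x)⁻¹ • ∑ j, ((lamD w x)⁻¹ i j) • grad (fun y => w.Y y j) x

/-- δU₂ = X⁻¹ λ⁻¹ ∇Ȳ − X⁻¹ λ⁻¹ λ̄ λ⁻¹ ∇Y − 4 v̄ U₂. -/
def dU2 (w φ : Data) (x : E3) (i : Fin 2) : E3 :=
  (XD w x)⁻¹ • ∑ j, ((lamD w x)⁻¹ i j) • grad (fun y => φ.Y y j) x
  - (XD w x)⁻¹ •
      ∑ j, (((lamD w x)⁻¹ * lamBar w φ x * (lamD w x)⁻¹) i j) • grad (fun y => w.Y y j) x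
  - (4 * φ.v x) • U2f w x i

/-- The matrix field ∇(λ̄ λ⁻¹) + X⁻¹ ∇Y Ȳᵗ λ⁻¹ (entries are vectors). -/
def MmatF (w φ : Data) (x : E3) (i j : Fin 2) : E3 :=
  grad (fun y => (lamBar w φ y * (lamD w y)⁻¹) i j) x
  + ((XD w x)⁻¹ * ∑ k, φ.Y x k * (lamD w x)⁻¹ k j) • grad (fun y => w.Y y i) x

/-- The manifestly nonnegative right-hand side F of the five-dimensional
    Carter identity. -/
def Fquant (w φ : Data) (x : E3) : ℝ :=
  ‖(4 : ℝ) • grad φ.v x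
      + (XD w x)⁻¹ • ∑ i, ∑ j, (φ.Y x i * (lamD w x)⁻¹ i j) • grad (fun y => w.Y y j) x‖ ^ 2
  + XD w x * ((∑ i, ∑ j, lamD w x i j * ⟪dU2 w φ x i, dU2 w φ x j⟫)
      + ∑ i, ∑ j, lamD w x i j *
          ⟪grad (fun y => U1f w φ y i) x, grad (fun y => U1f w φ y j) x⟫)
  + ∑ i, ∑ j, ⟪MmatF w φ x i j, MmatF w φ x j i⟫

/-- G_X = 4Δ₃v + X⁻¹ ∇Yᵗ λ⁻¹ ∇Y. -/
def GX (w : Data) (x : E3) : ℝ := 4 * lap w.v x + quadG (lamD w x)⁻¹ w.Y w.Y x / XD w x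

/-- G_λ = ∇·(λ⁻¹∇λ) + X⁻¹ λ⁻¹ ∇Y·∇Yᵗ. -/
def Glam (w : Data) (x : E3) : Mat2 := Matrix.of fun i j =>
  divg (fun y => ∑ k, ((lamD w y)⁻¹ i k) • grad (fun z => lamD w z k j) y) x
  + (XD w x)⁻¹ * ∑ k, (lamD w x)⁻¹ i k *
      ⟪grad (fun y => w.Y y k) x, grad (fun y => w.Y y j) x⟫

/-- G_Y = ∇·(X⁻¹ λ⁻¹ ∇Y). -/
def GYv (w : Data) (x : E3) : Fin 2 → ℝ := fun i =>
  divg (fun y => (XD w y)⁻¹ • ∑ j, ((lamD w y)⁻¹ i j) • grad (fun z => w.Y z j) y) x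

/-- Linearized operator Ġ_X at data w in direction φ. -/
def GXdot (w φ : Data) (x : E3) : ℝ :=
  4 * lap φ.v x + Real.exp (-(6 : ℝ) * w.v x) / cylRho x ^ 4 *
    (2 * quadG (w.L x).adjugate φ.Y w.Y x
      + quadG (φ.L x).adjugate w.Y w.Y x
      - 6 * φ.v x * quadG (w.L x).adjugate w.Y w.Y x)

/-- δ(λ'⁻¹ ∇λ') = λ'⁻¹ ∇λ̄' − λ'⁻¹ λ̄' λ'⁻¹ ∇λ' (first variation of λ'⁻¹∇λ'). -/
def deltaLinvGradL (w φ : Data) (y : E3) (i j : Fin 2) : E3 :=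
  ∑ k, ((w.L y)⁻¹ i k) • grad (fun z => φ.L z k j) y
  - ∑ k, (((w.L y)⁻¹ * φ.L y * (w.L y)⁻¹) i k) • grad (fun z => w.L z k j) y

/-- Linearized operator Ġ_λ at data w in direction φ. -/
def Gldot (w φ : Data) (x : E3) : Mat2 := Matrix.of fun i j =>
  2 * lap φ.v x * ((1 : Mat2) i j)
  + divg (fun y => deltaLinvGradL w φ y i j) x
  + Real.exp (-(6 : ℝ) * w.v x) / cylRho x ^ 4 *
      (2 * ∑ k, (w.L x).adjugate i k *
          ⟪grad (fun y => w.Y y k) x, grad (fun y => φ.Y y j) x⟫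
        + ∑ k, (φ.L x).adjugate i k *
            ⟪grad (fun y => w.Y y k) x, grad (fun y => w.Y y j) x⟫
        - 6 * φ.v x * ∑ k, (w.L x).adjugate i k *
            ⟪grad (fun y => w.Y y k) x, grad (fun y => w.Y y j) x⟫)

/-- Linearized operator Ġ_Y at data w in direction φ. -/
def GYdot (w φ : Data) (x : E3) : Fin 2 → ℝ := fun i =>
  divg (fun y => (Real.exp (-(6 : ℝ) * w.v y) / cylRho y ^ 4) •
      (∑ j, ((w.L y).adjugate i j) • grad (fun z => φ.Y z j) y
        + ∑ j, ((φ.L y).adjugate i j) • grad (fun z => w.Y z j) y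
        - (6 * φ.v y) • ∑ j, ((w.L y).adjugate i j) • grad (fun z => w.Y z j) y)) x

/-!
Let `P` be the orthogonal projection of a Euclidean space onto a `k`-dimensional subspace, and put
`r = ‖P x‖`. The linear field `x ↦ P x` has divergence `k`, and `r ^ s` is homogeneous of degree `s`
along it, so integrating `div (‖f‖² rˢ P x)` over the whole space gives
`(k + s) / 2 * ∫ ‖f‖² rˢ = - ∫ ⟪f, Df (P x)⟫ rˢ` for compactly supported `f` vanishing near `r = 0`.
With `c = (k + s) / 2`, expanding `0 ≤ ∫ ‖c f + Df (P x)‖² rˢ` and using `‖Df (P x)‖ ≤ ‖Df‖ r`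
yields the Hardy inequality `c² ∫ ‖f‖² rˢ ≤ ∫ ‖Df‖² rˢ⁺²`. The cylindrical radius of `ℝ³` is the
case `k = 2`, where `s = -2δ - 2` gives `c = -δ`; the matrix inequality is the sum over entries.
-/

section LinearVectorField

variable {E F : Type*} [NormedAddCommGroup E] [NormedSpace ℝ E] [FiniteDimensional ℝ E]
  [MeasurableSpace E] [BorelSpace E] {μ : Measure E} [μ.IsAddHaarMeasure]
  [NormedAddCommGroup F] [NormedSpace ℝ F]

-- The divergence of the linear vector field `A` is its trace.
lemma integral_fderiv_apply_clm_eq_neg_trace_smul {g : E → F} (hg : ContDiff ℝ 1 g)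
    (hgs : HasCompactSupport g) (A : E →L[ℝ] E) :
    ∫ x, fderiv ℝ g x (A x) ∂μ = -(LinearMap.trace ℝ E A • ∫ x, g x ∂μ) := by
  let b := Module.finBasis ℝ E
  let a i : E →L[ℝ] ℝ := (b.coord i).toContinuousLinearMap ∘L A
  have integrable_g : Integrable g μ := hg.continuous.integrable_of_hasCompactSupport hgs
  have integrable_smul_fderiv (i) : Integrable (fun x ↦ a i x • fderiv ℝ g x (b i)) μ :=
    ((a i).continuous.smul ((hg.continuous_fderiv one_ne_zero).clm_apply
      continuous_const)).integrable_of_hasCompactSupport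
      (hgs.fderiv_apply (𝕜 := ℝ) (b i)).smul_left
  have integral_smul_fderiv (i) :
      ∫ x, a i x • fderiv ℝ g x (b i) ∂μ = -(a i (b i) • ∫ x, g x ∂μ) := by
    rw [integral_smul_fderiv_eq_neg_fderiv_smul_of_integrable _ (integrable_smul_fderiv i)
      (((a i).continuous.smul hg.continuous).integrable_of_hasCompactSupport hgs.smul_left)
      (fun _ _ ↦ (a i).differentiableAt) (fun _ _ ↦ hg.differentiable one_ne_zero _)]
    · simp only [ContinuousLinearMap.fderiv, integral_smul]
    · simp only [ContinuousLinearMap.fderiv]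
      exact integrable_g.smul (a i (b i))
  calc ∫ x, fderiv ℝ g x (A x) ∂μ
    _ = ∫ x, ∑ i, a i x • fderiv ℝ g x (b i) ∂μ := by
      congr! 2 with x
      conv_lhs => rw [← b.sum_repr (A x), map_sum]
      simp only [map_smul]
      rfl
    _ = -((∑ i, a i (b i)) • ∫ x, g x ∂μ) := by
      rw [integral_finsetSum _ fun i _ ↦ integrable_smul_fderiv i, Finset.sum_smul,
        ← Finset.sum_neg_distrib]
      exact Finset.sum_congr rfl fun i _ ↦ integral_smul_fderiv i
    _ = -(LinearMap.trace ℝ E A • ∫ x, g x ∂μ) := by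
      rw [LinearMap.trace_eq_matrix_trace ℝ b, Matrix.trace]
      simp only [Matrix.diag_apply, LinearMap.toMatrix_apply]
      rfl

end LinearVectorField

lemma trace_starProjection {E : Type*} [NormedAddCommGroup E] [InnerProductSpace ℝ E]
    [FiniteDimensional ℝ E] (K : Submodule ℝ E) :
    LinearMap.trace ℝ E K.starProjection = Module.finrank ℝ K :=
  LinearMap.IsProj.trace ⟨K.starProjection_apply_mem, fun _ ↦ K.starProjection_eq_self_iff.2⟩

section RadialWeight

variable {E : Type*} [NormedAddCommGroup E] [InnerProductSpace ℝ E]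
  {K : Submodule ℝ E} [K.HasOrthogonalProjection] {x : E}

lemma contDiffAt_norm_starProjection_rpow {n : WithTop ℕ∞} (hx : K.starProjection x ≠ 0) (s : ℝ) :
    ContDiffAt ℝ n (fun y ↦ ‖K.starProjection y‖ ^ s) x :=
  (K.starProjection.contDiff.contDiffAt.norm ℝ hx).rpow_const_of_ne (norm_ne_zero_iff.2 hx)

lemma fderiv_norm_starProjection_rpow_apply_self (hx : K.starProjection x ≠ 0) (s : ℝ) :
    fderiv ℝ (fun y ↦ ‖K.starProjection y‖ ^ s) x (K.starProjection x) =
      s * ‖K.starProjection x‖ ^ s := by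
  have hnorm : DifferentiableAt ℝ (‖·‖) (K.starProjection x) :=
    (contDiffAt_norm ℝ (n := 1) hx).differentiableAt one_ne_zero
  have hr := (hnorm.hasFDerivAt.comp x K.starProjection.hasFDerivAt).rpow_const (p := s)
    (Or.inl (norm_ne_zero_iff.2 hx))
  have idem : K.starProjection (K.starProjection x) = K.starProjection x :=
    K.starProjection_eq_self_iff.2 (K.starProjection_apply_mem x)
  refine (congr($hr.fderiv (K.starProjection x))).trans ?_
  simp only [smul_apply, ContinuousLinearMap.comp_apply, idem, hnorm.fderiv_norm_self,
    Function.comp_apply, smul_eq_mul]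
  rw [Real.rpow_sub_one (norm_ne_zero_iff.2 hx)]
  field_simp

variable [MeasurableSpace E] [OpensMeasurableSpace E] {μ : Measure E} [IsFiniteMeasureOnCompacts μ]

lemma integrable_mul_norm_starProjection_rpow {C : Set E} (hC : IsCompact C)
    (hK : ∀ x ∈ C, K.starProjection x ≠ 0) {h : E → ℝ} (hh : ContinuousOn h C)
    (hzero : ∀ x ∉ C, h x = 0) (s : ℝ) :
    Integrable (fun x ↦ h x * ‖K.starProjection x‖ ^ s) μ := by
  have hcont : ContinuousOn (fun x ↦ h x * ‖K.starProjection x‖ ^ s) C := hh.mul fun x hx ↦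
    (contDiffAt_norm_starProjection_rpow (n := 0) (hK x hx) s).continuousAt.continuousWithinAt
  refine (integrableOn_iff_integrable_of_support_subset fun x hx ↦ ?_).1
    (hcont.integrableOn_compact hC)
  by_contra hxC
  exact hx (by simp only [hzero x hxC, zero_mul])

variable {F : Type*} [NormedAddCommGroup F] {f : E → F}

lemma integrable_norm_sq_mul_norm_starProjection_rpow
    (hf : Continuous f) (hfs : HasCompactSupport f)
    (hK : ∀ x ∈ tsupport f, K.starProjection x ≠ 0) (s : ℝ) :
    Integrable (fun x ↦ ‖f x‖ ^ 2 * ‖K.starProjection x‖ ^ s) μ :=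
  integrable_mul_norm_starProjection_rpow hfs.isCompact hK (hf.norm.pow 2).continuousOn
    (fun x hx ↦ by simp [image_eq_zero_of_notMem_tsupport hx]) s

lemma integrable_norm_fderiv_sq_mul_norm_starProjection_rpow [NormedSpace ℝ F]
    (hf : ContDiff ℝ 1 f) (hfs : HasCompactSupport f)
    (hK : ∀ x ∈ tsupport f, K.starProjection x ≠ 0) (s : ℝ) :
    Integrable (fun x ↦ ‖fderiv ℝ f x‖ ^ 2 * ‖K.starProjection x‖ ^ s) μ :=
  integrable_mul_norm_starProjection_rpow hfs.isCompact hK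
    ((hf.continuous_fderiv one_ne_zero).norm.pow 2).continuousOn
    (fun x hx ↦ by simp [fderiv_of_notMem_tsupport ℝ hx]) s

lemma integrable_inner_fderiv_mul_norm_starProjection_rpow [InnerProductSpace ℝ F]
    (hf : ContDiff ℝ 1 f) (hfs : HasCompactSupport f)
    (hK : ∀ x ∈ tsupport f, K.starProjection x ≠ 0) (s : ℝ) :
    Integrable (fun x ↦ ⟪f x, fderiv ℝ f x (K.starProjection x)⟫ * ‖K.starProjection x‖ ^ s) μ :=
  have hradial : Continuous fun x ↦ fderiv ℝ f x (K.starProjection x) :=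
    (hf.continuous_fderiv one_ne_zero).clm_apply K.starProjection.continuous
  integrable_mul_norm_starProjection_rpow hfs.isCompact hK
    (hf.continuous.inner hradial).continuousOn
    (fun x hx ↦ by simp [image_eq_zero_of_notMem_tsupport hx]) s

end RadialWeight

section Hardy

variable {E F : Type*} [NormedAddCommGroup E] [InnerProductSpace ℝ E]
  [NormedAddCommGroup F] [InnerProductSpace ℝ F] {K : Submodule ℝ E} [K.HasOrthogonalProjection]
  {f : E → F} {x : E}

lemma contDiff_norm_sq_mul_norm_starProjection_rpow {n : WithTop ℕ∞} (hf : ContDiff ℝ n f)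
    (hK : ∀ x ∈ tsupport f, K.starProjection x ≠ 0) (s : ℝ) :
    ContDiff ℝ n fun x ↦ ‖f x‖ ^ 2 * ‖K.starProjection x‖ ^ s := by
  refine contMDiff_iff_contDiff.1 (contMDiff_of_tsupport fun x hx ↦ ContDiffAt.contMDiffAt ?_)
  have hx' : x ∈ tsupport f :=
    tsupport_comp_subset (g := fun y ↦ ‖y‖ ^ 2) (by simp) f (tsupport_mul_subset_left hx)
  exact (hf.norm_sq ℝ).contDiffAt.mul (contDiffAt_norm_starProjection_rpow (hK x hx') s)

lemma fderiv_norm_sq_mul_norm_starProjection_rpow_apply_self (hf : DifferentiableAt ℝ f x)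
    (hK : x ∈ tsupport f → K.starProjection x ≠ 0) (s : ℝ) :
    fderiv ℝ (fun y ↦ ‖f y‖ ^ 2 * ‖K.starProjection y‖ ^ s) x (K.starProjection x) =
      2 * (⟪f x, fderiv ℝ f x (K.starProjection x)⟫ * ‖K.starProjection x‖ ^ s) +
        s * (‖f x‖ ^ 2 * ‖K.starProjection x‖ ^ s) := by
  by_cases hx : K.starProjection x = 0
  · have hfx : f x = 0 := image_eq_zero_of_notMem_tsupport fun h ↦ hK h hx
    simp [hx, hfx]
  · have hw := (contDiffAt_norm_starProjection_rpow (n := 1) hx s).differentiableAt one_ne_zero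
    rw [fderiv_fun_mul (hf.norm_sq ℝ) hw, hf.hasFDerivAt.norm_sq.fderiv]
    simp only [add_apply, smul_apply, ContinuousLinearMap.comp_apply,
      innerSL_apply_apply, smul_eq_mul, nsmul_eq_mul,
      fderiv_norm_starProjection_rpow_apply_self hx]
    push_cast
    ring

lemma sq_mul_norm_sq_add_inner_nonneg (c s : ℝ) :
    0 ≤ c ^ 2 * (‖f x‖ ^ 2 * ‖K.starProjection x‖ ^ s) +
        2 * c * (⟪f x, fderiv ℝ f x (K.starProjection x)⟫ * ‖K.starProjection x‖ ^ s) +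
        ‖fderiv ℝ f x‖ ^ 2 * ‖K.starProjection x‖ ^ (s + 2) := by
  set r := ‖K.starProjection x‖
  set d := fderiv ℝ f x (K.starProjection x)
  have hd : ‖d‖ ≤ ‖fderiv ℝ f x‖ * r := (fderiv ℝ f x).le_opNorm _
  have hr : r ^ s * r ^ 2 ≤ r ^ (s + 2) := by
    simpa only [Real.rpow_two] using Real.le_rpow_add (norm_nonneg (K.starProjection x)) s 2
  have hdr : ‖d‖ ^ 2 * r ^ s ≤ ‖fderiv ℝ f x‖ ^ 2 * r ^ (s + 2) :=
    calc ‖d‖ ^ 2 * r ^ s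
      _ ≤ (‖fderiv ℝ f x‖ * r) ^ 2 * r ^ s := by gcongr
      _ = ‖fderiv ℝ f x‖ ^ 2 * (r ^ s * r ^ 2) := by ring
      _ ≤ ‖fderiv ℝ f x‖ ^ 2 * r ^ (s + 2) := by gcongr
  calc 0 ≤ ‖c • f x + d‖ ^ 2 * r ^ s := by positivity
    _ = c ^ 2 * (‖f x‖ ^ 2 * r ^ s) + 2 * c * (⟪f x, d⟫ * r ^ s) + ‖d‖ ^ 2 * r ^ s := by
      rw [norm_add_sq_real, norm_smul, mul_pow, Real.norm_eq_abs, sq_abs, real_inner_smul_left]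
      ring
    _ ≤ c ^ 2 * (‖f x‖ ^ 2 * r ^ s) + 2 * c * (⟪f x, d⟫ * r ^ s) +
        ‖fderiv ℝ f x‖ ^ 2 * r ^ (s + 2) := add_le_add_right hdr _

variable [FiniteDimensional ℝ E] [MeasurableSpace E] [BorelSpace E] {μ : Measure E}
  [μ.IsAddHaarMeasure]

lemma integral_inner_fderiv_mul_norm_starProjection_rpow (hf : ContDiff ℝ 1 f)
    (hfs : HasCompactSupport f) (hK : ∀ x ∈ tsupport f, K.starProjection x ≠ 0) (s : ℝ) :
    ∫ x, ⟪f x, fderiv ℝ f x (K.starProjection x)⟫ * ‖K.starProjection x‖ ^ s ∂μ =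
      -((Module.finrank ℝ K + s) / 2 * ∫ x, ‖f x‖ ^ 2 * ‖K.starProjection x‖ ^ s ∂μ) := by
  have hgs : HasCompactSupport fun x ↦ ‖f x‖ ^ 2 * ‖K.starProjection x‖ ^ s :=
    (hfs.comp_left (g := fun y ↦ ‖y‖ ^ 2) (by simp)).mul_right
  have by_parts := integral_fderiv_apply_clm_eq_neg_trace_smul (μ := μ)
    (contDiff_norm_sq_mul_norm_starProjection_rpow hf hK s) hgs K.starProjection
  simp_rw [fun x ↦ fderiv_norm_sq_mul_norm_starProjection_rpow_apply_self
    (hf.differentiable one_ne_zero x) (hK x) s] at by_parts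
  rw [integral_add
      ((integrable_inner_fderiv_mul_norm_starProjection_rpow hf hfs hK s).const_mul 2)
      ((integrable_norm_sq_mul_norm_starProjection_rpow hf.continuous hfs hK s).const_mul s),
    integral_const_mul, integral_const_mul, trace_starProjection,
    smul_eq_mul] at by_parts
  linarith

theorem hardy_inequality_starProjection (hf : ContDiff ℝ 1 f)
    (hfs : HasCompactSupport f) (hK : ∀ x ∈ tsupport f, K.starProjection x ≠ 0) {S : Set E}
    (hS : Function.support f ⊆ S) (s : ℝ) :
    ((Module.finrank ℝ K + s) / 2) ^ 2 * ∫ x in S, ‖f x‖ ^ 2 * ‖K.starProjection x‖ ^ s ∂μ ≤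
      ∫ x in S, ‖fderiv ℝ f x‖ ^ 2 * ‖K.starProjection x‖ ^ (s + 2) ∂μ := by
  set c := (Module.finrank ℝ K + s) / 2
  have hfS (x) (hx : x ∉ S) : f x = 0 := Function.notMem_support.1 fun h ↦ hx (hS h)
  have hbp : ∫ x in S, ⟪f x, fderiv ℝ f x (K.starProjection x)⟫ * ‖K.starProjection x‖ ^ s ∂μ =
      -(c * ∫ x in S, ‖f x‖ ^ 2 * ‖K.starProjection x‖ ^ s ∂μ) := by
    rw [setIntegral_eq_integral_of_forall_compl_eq_zero fun x hx ↦ by simp [hfS x hx],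
      setIntegral_eq_integral_of_forall_compl_eq_zero fun x hx ↦ by simp [hfS x hx],
      integral_inner_fderiv_mul_norm_starProjection_rpow hf hfs hK s]
  have hsq := (integrable_norm_sq_mul_norm_starProjection_rpow (μ := μ.restrict S)
    hf.continuous hfs hK s).const_mul (c ^ 2)
  have hinner := (integrable_inner_fderiv_mul_norm_starProjection_rpow (μ := μ.restrict S)
    hf hfs hK s).const_mul (2 * c)
  have hnonneg := integral_nonneg_of_ae (μ := μ.restrict S)
    (.of_forall fun x ↦ sq_mul_norm_sq_add_inner_nonneg (K := K) (f := f) (x := x) c s)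
  rw [integral_add (by exact hsq.add hinner)
      (integrable_norm_fderiv_sq_mul_norm_starProjection_rpow hf hfs hK (s + 2)),
    integral_add hsq hinner, integral_const_mul, integral_const_mul, hbp] at hnonneg
  linarith

end Hardy

section CylindricalRadius

/-- The symmetry axis `ρ = 0` of the cylindrical coordinates on `E3`; the projection to its
orthogonal complement `axisᗮ` forgets the axial coordinate. -/
def axis : Submodule ℝ E3 := ℝ ∙ (EuclideanSpace.single 2 1 : E3)

lemma cylRho_eq_norm_starProjection (x : E3) : cylRho x = ‖axisᗮ.starProjection x‖ := by
  have hunit : ‖(EuclideanSpace.single 2 1 : E3)‖ = 1 := by simp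
  have haxis : ‖axis.starProjection x‖ ^ 2 = x 2 ^ 2 := by
    rw [axis, Submodule.starProjection_unit_singleton ℝ hunit, norm_smul, hunit]
    simp [EuclideanSpace.inner_single_left]
  have hpyth := axis.norm_sq_eq_add_norm_sq_starProjection x
  rw [haxis, EuclideanSpace.real_norm_sq_eq, Fin.sum_univ_three] at hpyth
  rw [cylRho, ← Real.sqrt_sq (norm_nonneg (axisᗮ.starProjection x))]
  congr 1
  linarith

lemma finrank_axis_orthogonal : Module.finrank ℝ axisᗮ = 2 :=
  have : Fact (Module.finrank ℝ E3 = 2 + 1) := ⟨finrank_euclideanSpace_fin⟩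
  Submodule.finrank_orthogonal_span_singleton (by simp)

lemma norm_grad (f : E3 → ℝ) (x : E3) : ‖grad f x‖ = ‖fderiv ℝ f x‖ :=
  (InnerProductSpace.toDual ℝ E3).symm.norm_map _

variable {f : E3 → ℝ} {ρ₀ : ℝ}

lemma starProjection_axis_orthogonal_ne_zero (hρ₀ : 0 < ρ₀) (hsupp : Function.support f ⊆ Omg ρ₀) :
    ∀ x ∈ tsupport f, axisᗮ.starProjection x ≠ 0 := by
  have hclosed : IsClosed {x | ρ₀ ≤ cylRho x} :=
    isClosed_le continuous_const (by unfold cylRho; fun_prop)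
  intro x hx hx0
  have hsub : Function.support f ⊆ {x | ρ₀ ≤ cylRho x} :=
    hsupp.trans fun y (hy : ρ₀ < cylRho y) ↦ hy.le
  have hle : ρ₀ ≤ cylRho x := closure_minimal hsub hclosed hx
  rw [cylRho_eq_norm_starProjection, hx0, norm_zero] at hle
  exact hρ₀.not_ge hle

lemma integrable_sq_mul_cylRho_rpow (hρ₀ : 0 < ρ₀) (hf : Continuous f)
    (hfs : HasCompactSupport f) (hsupp : Function.support f ⊆ Omg ρ₀) (s : ℝ) :
    Integrable fun x ↦ f x ^ 2 * cylRho x ^ s := by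
  simpa only [Real.norm_eq_abs, sq_abs, ← cylRho_eq_norm_starProjection] using
    integrable_norm_sq_mul_norm_starProjection_rpow (μ := volume) hf hfs
      (starProjection_axis_orthogonal_ne_zero hρ₀ hsupp) s

lemma integrable_norm_grad_sq_mul_cylRho_rpow (hρ₀ : 0 < ρ₀) (hf : ContDiff ℝ 1 f)
    (hfs : HasCompactSupport f) (hsupp : Function.support f ⊆ Omg ρ₀) (s : ℝ) :
    Integrable fun x ↦ ‖grad f x‖ ^ 2 * cylRho x ^ s := by
  simpa only [norm_grad, ← cylRho_eq_norm_starProjection] using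
    integrable_norm_fderiv_sq_mul_norm_starProjection_rpow (μ := volume) hf hfs
      (starProjection_axis_orthogonal_ne_zero hρ₀ hsupp) s

theorem weighted_poincare_scalar (δ : ℝ) (hρ₀ : 0 < ρ₀) (hf : ContDiff ℝ 1 f)
    (hfs : HasCompactSupport f) (hsupp : Function.support f ⊆ Omg ρ₀) :
    δ ^ 2 * ∫ x in Omg ρ₀, f x ^ 2 * cylRho x ^ (-2 * δ - 2) ≤
      ∫ x in Omg ρ₀, ‖grad f x‖ ^ 2 * cylRho x ^ (-2 * δ) := by
  have hardy := hardy_inequality_starProjection (μ := volume) hf hfs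
    (starProjection_axis_orthogonal_ne_zero hρ₀ hsupp) hsupp (-2 * δ - 2)
  have hconst : ((2 : ℕ) + (-2 * δ - 2)) / 2 = -δ := by push_cast; ring
  simpa only [finrank_axis_orthogonal, hconst, neg_sq, sub_add_cancel, Real.norm_eq_abs, sq_abs,
    ← norm_grad, ← cylRho_eq_norm_starProjection] using hardy

end CylindricalRadius

theorem weighted_poincare_matrix_general (δ ρ₀ : ℝ) (hδ : δ ≠ 0) (hρ₀ : 0 < ρ₀)
    (L : E3 → Mat2) (hL : ∀ i j, ContDiff ℝ 1 fun x => L x i j)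
    (hsupp : ∀ i j, HasCompactSupport fun x => L x i j)
    (hvan : ∀ x, cylRho x ≤ ρ₀ → L x = 0) :
    (∫ x in Omg ρ₀, matAbsSq (L x) * cylRho x ^ (-2 * δ - 2)) ≤
      δ⁻¹ ^ 2 * ∫ x in Omg ρ₀, gradMatAbsSq L x * cylRho x ^ (-2 * δ) := by
  have hsubset (i j) : Function.support (fun x ↦ L x i j) ⊆ Omg ρ₀ :=
    fun x hx ↦ not_le.1 fun hle ↦ hx congr($(hvan x hle) i j)
  have hint (i j) := (integrable_sq_mul_cylRho_rpow hρ₀ (hL i j).continuous (hsupp i j)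
    (hsubset i j) (-2 * δ - 2)).integrableOn (s := Omg ρ₀)
  have hint_grad (i j) := (integrable_norm_grad_sq_mul_cylRho_rpow hρ₀ (hL i j) (hsupp i j)
    (hsubset i j) (-2 * δ)).integrableOn (s := Omg ρ₀)
  have hentry (i j) := weighted_poincare_scalar δ hρ₀ (hL i j) (hsupp i j) (hsubset i j)
  rw [inv_pow, ← div_eq_inv_mul, le_div_iff₀' (by positivity)]
  simp only [matAbsSq, gradMatAbsSq, Finset.sum_mul]
  simp_rw [integral_finsetSum _ fun i _ ↦ integrable_finsetSum _ fun j _ ↦ hint i j,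
    integral_finsetSum _ fun i _ ↦ integrable_finsetSum _ fun j _ ↦ hint_grad i j,
    integral_finsetSum _ fun j _ ↦ hint _ j, integral_finsetSum _ fun j _ ↦ hint_grad _ j,
    Finset.mul_sum]
  gcongr with i _ j _
  exact hentry i j

/-- Lemma 2(b): weighted Poincaré inequality with axial weights for
symmetric 2×2 matrix fields vanishing on K_{ρ₀}:
δ⁻² ∫_{Ω_{ρ₀}} |∇λ̄'|² ρ^{−2δ} dΣ ≥ ∫_{Ω_{ρ₀}} |λ̄'|² ρ^{−2δ−2} dΣ. -/
theorem weighted_poincare_matrix (δ ρ₀ : ℝ) (hδ : δ ≠ 0) (hρ₀ : 0 < ρ₀)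
    (L : E3 → Mat2) (hL : ∀ i j, ContDiff ℝ 1 fun x => L x i j)
    (hsymm : ∀ x, (L x).IsSymm)
    (hsupp : ∀ i j, HasCompactSupport fun x => L x i j)
    (hvan : ∀ x, cylRho x ≤ ρ₀ → L x = 0) :
    (∫ x in Omg ρ₀, matAbsSq (L x) * cylRho x ^ (-2 * δ - 2)) ≤
      δ⁻¹ ^ 2 * ∫ x in Omg ρ₀, gradMatAbsSq L x * cylRho x ^ (-2 * δ) :=
  weighted_poincare_matrix_general δ ρ₀ hδ hρ₀ L hL hsupp hvan

end BHMass
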